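/- arXiv:1611.03189 — 3 statements merged into one kernel-verified Lean document; each statement's English description precedes it below -/
import Mathlib

section
/- Let K_ff, E_ff be symmetric n×n real matrices, K_fc, E_fc be n×m real matrices, K_cc a symmetric invertible m×m real matrix, and set K_cf := K_fcᵀ and E_cf := E_fcᵀ. Define A := (K_ff + E_ff) − (K_fc + E_fc)K_cc⁻¹(K_cf + E_cf), A_H := K_ff − K_fc K_cc⁻¹ K_cf, and ‖E‖_F := (‖E_ff‖_F² + 2‖E_fc‖_F²)^{1/2}. If ‖E‖_F ≤ (2N)^{1/2}·ε for some integer N ≥ 1 and ε ≥ 0, then ‖A − A_H‖_F ≤ (2N)^{1/2}·√(1 + 2‖K_cc⁻¹K_cf‖_F²)·ε + 2N·‖K_cc⁻¹‖_F·ε². -/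
open Matrix

/-- Frobenius norm of a real matrix. -/
noncomputable def frobNorm {m n : ℕ} (M : Matrix (Fin m) (Fin n) ℝ) : ℝ :=
  Real.sqrt (∑ i, ∑ j, M i j ^ 2)

section FrobAux
attribute [local instance] Matrix.frobeniusNormedAddCommGroup

theorem frobNorm_eq_norm {m n : ℕ} (M : Matrix (Fin m) (Fin n) ℝ) : frobNorm M = ‖M‖ := by
  rw [Matrix.frobenius_norm_def, frobNorm, Real.sqrt_eq_rpow]
  simp

theorem frobNorm_mul_le {l m n : ℕ} (M : Matrix (Fin l) (Fin m) ℝ)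
    (P : Matrix (Fin m) (Fin n) ℝ) : frobNorm (M * P) ≤ frobNorm M * frobNorm P := by
  simp only [frobNorm_eq_norm]
  exact Matrix.frobenius_norm_mul M P

theorem frobNorm_sub_le {m n : ℕ} (M P : Matrix (Fin m) (Fin n) ℝ) :
    frobNorm (M - P) ≤ frobNorm M + frobNorm P := by
  simp only [frobNorm_eq_norm]
  exact norm_sub_le M P

theorem frobNorm_transpose {m n : ℕ} (M : Matrix (Fin m) (Fin n) ℝ) :
    frobNorm Mᵀ = frobNorm M := by
  simp only [frobNorm_eq_norm]
  exact Matrix.frobenius_norm_transpose M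

theorem frobNorm_nonneg {m n : ℕ} (M : Matrix (Fin m) (Fin n) ℝ) : 0 ≤ frobNorm M :=
  Real.sqrt_nonneg _

end FrobAux

/-- Error estimate for the hierarchical factorization with `N` local
compressions of accuracy `ε`.  With `A`, `A_H` the perturbed/unperturbed Schur
complements as before and `‖E‖_F := (‖E_ff‖_F² + 2‖E_fc‖_F²)^{1/2} ≤ (2N)^{1/2}·ε`,
one has `‖A − A_H‖_F ≤ (2N)^{1/2}·√(1 + 2‖K_cc⁻¹K_cf‖_F²)·ε + 2N·‖K_cc⁻¹‖_F·ε²`. -/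
theorem hierarchical_factorization_error_estimate_N_compressions {n m : ℕ}
    (Kff Eff : Matrix (Fin n) (Fin n) ℝ)
    (Kfc Efc : Matrix (Fin n) (Fin m) ℝ)
    (Kcc : Matrix (Fin m) (Fin m) ℝ)
    (hKff : Kff.IsSymm) (hEff : Eff.IsSymm) (hKcc : Kcc.IsSymm)
    (hinv : IsUnit Kcc.det)
    (A AH : Matrix (Fin n) (Fin n) ℝ)
    (hA : A = (Kff + Eff) - (Kfc + Efc) * Kcc⁻¹ * (Kfcᵀ + Efcᵀ))
    (hAH : AH = Kff - Kfc * Kcc⁻¹ * Kfcᵀ)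
    (N : ℕ) (hN : 1 ≤ N) (ε : ℝ) (hε : 0 ≤ ε)
    (hEF : Real.sqrt (frobNorm Eff ^ 2 + 2 * frobNorm Efc ^ 2)
             ≤ Real.sqrt (2 * N) * ε) :
    frobNorm (A - AH) ≤
      Real.sqrt (2 * N) * Real.sqrt (1 + 2 * frobNorm (Kcc⁻¹ * Kfcᵀ) ^ 2) * ε
        + 2 * N * frobNorm Kcc⁻¹ * ε ^ 2 := by
  have hS : (Kcc⁻¹)ᵀ = Kcc⁻¹ := by
    rw [Matrix.transpose_nonsing_inv, hKcc.eq]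
  have key : A - AH = Eff - (Efc * (Kcc⁻¹ * Kfcᵀ))ᵀ - Efc * (Kcc⁻¹ * Kfcᵀ)
      - Efc * (Kcc⁻¹ * Efcᵀ) := by
    rw [hA, hAH]
    simp only [Matrix.transpose_mul, Matrix.transpose_transpose, hS, Matrix.add_mul,
      Matrix.mul_add, Matrix.mul_assoc]
    abel
  have h1 := frobNorm_sub_le (Eff - (Efc * (Kcc⁻¹ * Kfcᵀ))ᵀ - Efc * (Kcc⁻¹ * Kfcᵀ))
    (Efc * (Kcc⁻¹ * Efcᵀ))
  have h2 := frobNorm_sub_le (Eff - (Efc * (Kcc⁻¹ * Kfcᵀ))ᵀ) (Efc * (Kcc⁻¹ * Kfcᵀ))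
  have h3 := frobNorm_sub_le Eff (Efc * (Kcc⁻¹ * Kfcᵀ))ᵀ
  rw [frobNorm_transpose] at h3
  have h4 := frobNorm_mul_le Efc (Kcc⁻¹ * Kfcᵀ)
  have h5 := frobNorm_mul_le Efc (Kcc⁻¹ * Efcᵀ)
  have h6 := frobNorm_mul_le Kcc⁻¹ Efcᵀ
  rw [frobNorm_transpose] at h6
  rw [key]
  have he := frobNorm_nonneg Eff
  have hf := frobNorm_nonneg Efc
  have hs := frobNorm_nonneg Kcc⁻¹
  have hx := frobNorm_nonneg (Kcc⁻¹ * Kfcᵀ)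
  have h7 := mul_le_mul_of_nonneg_left h6 hf
  generalize frobNorm Eff = e at *
  generalize frobNorm Efc = f at *
  generalize frobNorm Kcc⁻¹ = s at *
  generalize frobNorm (Kcc⁻¹ * Kfcᵀ) = x at *
  have hcs : e + 2 * f * x ≤ Real.sqrt (e ^ 2 + 2 * f ^ 2) * Real.sqrt (1 + 2 * x ^ 2) := by
    rw [← Real.sqrt_mul (by positivity)]
    apply Real.le_sqrt_of_sq_le
    nlinarith [sq_nonneg (e * x - f)]
  have hlin := hcs.trans (mul_le_mul_of_nonneg_right hEF (Real.sqrt_nonneg (1 + 2 * x ^ 2)))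
  have hsq : e ^ 2 + 2 * f ^ 2 ≤ 2 * N * ε ^ 2 := by
    have h := pow_le_pow_left₀ (Real.sqrt_nonneg _) hEF 2
    rwa [mul_pow, Real.sq_sqrt (by positivity), Real.sq_sqrt (by positivity)] at h
  have hq : f * (s * f) ≤ 2 * N * s * ε ^ 2 := by
    have : f ^ 2 ≤ 2 * N * ε ^ 2 := by nlinarith [sq_nonneg e, sq_nonneg f]
    have := mul_le_mul_of_nonneg_right this hs
    linarith
  linarith
end

section
/- Let A be an n×n real symmetric positive definite matrix with largest eigenvalue λ_max and smallest eigenvalue λ_min, and condition number κ(A) = λ_max/λ_min. Let A_H be an n×n real symmetric matrix with ‖(A − A_H)v‖ ≤ ε·λ_max·‖v‖ for all v ∈ ℝⁿ, where ε ≥ 0 satisfies ε·κ(A) < 1. Then for every v ∈ ℝⁿ, (1 − ε·κ(A))·vᵀAv ≤ vᵀA_H v ≤ (1 + ε·κ(A))·vᵀAv; consequently A_H is symmetric positive definite and every eigenvalue ρ of A_H⁻¹A satisfies 1/(1 + ε·κ(A)) ≤ ρ ≤ 1/(1 − ε·κ(A)), so κ(A_H⁻¹A) ≤ (1 + ε·κ(A))/(1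 − ε·κ(A)). -/
open Matrix

/-- Euclidean norm on ℝⁿ. -/
noncomputable def enorm {n : ℕ} (v : Fin n → ℝ) : ℝ := Real.sqrt (∑ i, v i ^ 2)

theorem self_pos {n : ℕ} (v : Fin n → ℝ) (hv : v ≠ 0) : 0 < v ⬝ᵥ v := by
  simpa using dotProduct_star_self_pos_iff.2 hv

theorem cs_aux {n : ℕ} (v w : Fin n → ℝ) :
    |v ⬝ᵥ w| ≤ _root_.enorm v * _root_.enorm w := by
  unfold _root_.enorm
  rw [← Real.sqrt_mul (Finset.sum_nonneg fun i _ => sq_nonneg _)]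
  exact Real.abs_le_sqrt (Finset.sum_mul_sq_le_sq_mul_sq _ _ _)

theorem rayleigh_aux {n : ℕ} (A : Matrix (Fin n) (Fin n) ℝ) (hA : A.IsHermitian) (m : ℝ)
    (h : ∀ (lam : ℝ) (v : Fin n → ℝ), v ≠ 0 → A.mulVec v = lam • v → m ≤ lam)
    (v : Fin n → ℝ) : m * (v ⬝ᵥ v) ≤ v ⬝ᵥ A.mulVec v := by
  have hB : (A - m • (1 : Matrix (Fin n) (Fin n) ℝ)).IsHermitian := by
    apply hA.sub
    simp [IsHermitian]
  have hP : (A - m • (1 : Matrix (Fin n) (Fin n) ℝ)).PosSemidef := by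
    rw [hB.posSemidef_iff_eigenvalues_nonneg]
    intro i
    have h1 := hB.mulVec_eigenvectorBasis i
    have h2 : (hB.eigenvectorBasis i).ofLp ≠ 0 := by
      intro h0
      exact hB.eigenvectorBasis.orthonormal.ne_zero i ((WithLp.ofLp_eq_zero 2).1 h0)
    rw [sub_mulVec, smul_mulVec, one_mulVec, sub_eq_iff_eq_add, ← add_smul] at h1
    have h3 := h _ _ h2 h1
    simp only [Pi.zero_apply]
    linarith
  have h4 := hP.dotProduct_mulVec_nonneg v
  simp only [star_trivial] at h4
  rw [sub_mulVec, smul_mulVec, one_mulVec, dotProduct_sub, dotProduct_smul, smul_eq_mul] at h4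
  linarith

/-- Uniform accuracy case.  If `A` is SPD with extreme eigenvalues
`λ_max, λ_min`, `A_H` is symmetric with `‖(A − A_H)v‖ ≤ ε·λ_max·‖v‖` for all `v`,
and `ε·κ(A) < 1` with `κ(A) = λ_max/λ_min`, then
`(1 − ε·κ(A))·vᵀAv ≤ vᵀA_Hv ≤ (1 + ε·κ(A))·vᵀAv` for all `v`; consequently `A_H`
is SPD and every eigenvalue `ρ` of `A_H⁻¹A` satisfies
`1/(1 + ε·κ(A)) ≤ ρ ≤ 1/(1 − ε·κ(A))`, so `κ(A_H⁻¹A) ≤ (1 + ε·κ(A))/(1 − ε·κ(A))`. -/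
theorem preconditioner_uniform_accuracy {n : ℕ}
    (A AH : Matrix (Fin n) (Fin n) ℝ)
    (hA : A.PosDef) (hAH : AH.IsSymm)
    (lammax lammin : ℝ)
    (hmaxev : ∃ v : Fin n → ℝ, v ≠ 0 ∧ A.mulVec v = lammax • v)
    (hmaxub : ∀ (lam : ℝ) (v : Fin n → ℝ), v ≠ 0 → A.mulVec v = lam • v → lam ≤ lammax)
    (hminev : ∃ v : Fin n → ℝ, v ≠ 0 ∧ A.mulVec v = lammin • v)
    (hminlb : ∀ (lam : ℝ) (v : Fin n → ℝ), v ≠ 0 → A.mulVec v = lam • v → lammin ≤ lam)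
    (ε : ℝ) (hε : 0 ≤ ε)
    (happrox : ∀ v : Fin n → ℝ, _root_.enorm ((A - AH).mulVec v) ≤ ε * lammax * _root_.enorm v)
    (δ : ℝ) (hδ : δ = ε * (lammax / lammin)) (hδ1 : δ < 1) :
    (∀ v : Fin n → ℝ,
        (1 - δ) * (v ⬝ᵥ A.mulVec v) ≤ v ⬝ᵥ AH.mulVec v ∧
        v ⬝ᵥ AH.mulVec v ≤ (1 + δ) * (v ⬝ᵥ A.mulVec v)) ∧
    AH.PosDef ∧
    (∀ (ρ : ℝ) (v : Fin n → ℝ), v ≠ 0 → (AH⁻¹ * A).mulVec v = ρ • v →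
        1 / (1 + δ) ≤ ρ ∧ ρ ≤ 1 / (1 - δ)) ∧
    (∀ (ρ₁ ρ₂ : ℝ) (v₁ v₂ : Fin n → ℝ), v₁ ≠ 0 → v₂ ≠ 0 →
        (AH⁻¹ * A).mulVec v₁ = ρ₁ • v₁ → (AH⁻¹ * A).mulVec v₂ = ρ₂ • v₂ →
        ρ₁ / ρ₂ ≤ (1 + δ) / (1 - δ)) := by
  have hlmin : 0 < lammin := by
    obtain ⟨v, hv, h⟩ := hminev
    have h1 := hA.dotProduct_mulVec_pos hv
    have h2 := self_pos v hv
    simp only [star_trivial] at h1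
    rw [h, dotProduct_smul, smul_eq_mul] at h1
    exact pos_of_mul_pos_left h1 h2.le
  have hlmax : 0 < lammax := by
    obtain ⟨v, hv, h⟩ := hminev
    exact lt_of_lt_of_le hlmin (hmaxub _ v hv h)
  have hδ0 : 0 ≤ δ := by rw [hδ]; positivity
  have key : ∀ v : Fin n → ℝ, |v ⬝ᵥ (A - AH).mulVec v| ≤ δ * (v ⬝ᵥ A.mulVec v) := by
    intro v
    have h1 := cs_aux v ((A - AH).mulVec v)
    have h2 := rayleigh_aux A hA.isHermitian lammin hminlb v
    have h3 := happrox v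
    have h0 : 0 ≤ _root_.enorm v := Real.sqrt_nonneg _
    have h4 : _root_.enorm v * _root_.enorm v = v ⬝ᵥ v := by
      unfold _root_.enorm
      rw [Real.mul_self_sqrt (Finset.sum_nonneg fun i _ => sq_nonneg _)]
      simp [dotProduct, sq]
    calc _ ≤ _ := h1
      _ ≤ _root_.enorm v * (ε * lammax * _root_.enorm v) := by gcongr
      _ = ε * lammax * (v ⬝ᵥ v) := by rw [← h4]; ring
      _ = δ * (lammin * (v ⬝ᵥ v)) := by rw [hδ]; field_simp
      _ ≤ _ := by gcongr
  have b : ∀ v : Fin n → ℝ,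
        (1 - δ) * (v ⬝ᵥ A.mulVec v) ≤ v ⬝ᵥ AH.mulVec v ∧
        v ⬝ᵥ AH.mulVec v ≤ (1 + δ) * (v ⬝ᵥ A.mulVec v) := by
    intro v
    have h := key v
    rw [sub_mulVec, dotProduct_sub, abs_le] at h
    constructor <;> linarith [h.1, h.2]
  have hpos : ∀ v : Fin n → ℝ, v ≠ 0 → 0 < v ⬝ᵥ A.mulVec v := by
    intro v hv
    simpa using hA.dotProduct_mulVec_pos hv
  have hposH : ∀ v : Fin n → ℝ, v ≠ 0 → 0 < v ⬝ᵥ AH.mulVec v := fun v hv =>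
    lt_of_lt_of_le (mul_pos (by linarith) (hpos v hv)) (b v).1
  have hPD : AH.PosDef := by
    refine PosDef.of_dotProduct_mulVec_pos ?_ ?_
    · rw [IsHermitian, conjTranspose_eq_transpose_of_trivial]; exact hAH
    · intro v hv
      simpa using hposH v hv
  have ev : ∀ (ρ : ℝ) (v : Fin n → ℝ), v ≠ 0 → (AH⁻¹ * A).mulVec v = ρ • v →
        1 / (1 + δ) ≤ ρ ∧ ρ ≤ 1 / (1 - δ) := by
    intro ρ v hv h
    have h1 : A.mulVec v = ρ • AH.mulVec v := by
      rw [← mulVec_smul, ← h, mulVec_mulVec, ← Matrix.mul_assoc,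
        Matrix.mul_nonsing_inv _ ((Matrix.isUnit_iff_isUnit_det _).1 hPD.isUnit), Matrix.one_mul]
    have h2 : v ⬝ᵥ A.mulVec v = ρ * (v ⬝ᵥ AH.mulVec v) := by
      rw [h1, dotProduct_smul, smul_eq_mul]
    have p1 := hpos v hv
    have p2 := hposH v hv
    obtain ⟨b1, b2⟩ := b v
    have h3 : ρ = (v ⬝ᵥ A.mulVec v) / (v ⬝ᵥ AH.mulVec v) := by
      rw [h2]; field_simp
    rw [h3]
    constructor
    · rw [div_le_div_iff₀ (by linarith) p2]; linarith
    · rw [div_le_div_iff₀ p2 (by linarith)]; linarith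
  refine ⟨b, hPD, ev, ?_⟩
  intro ρ₁ ρ₂ v₁ v₂ hv₁ hv₂ h₁ h₂
  have e1 := (ev ρ₁ v₁ hv₁ h₁).2
  have e2 := (ev ρ₂ v₂ hv₂ h₂).1
  have d1 : 0 < 1 - δ := by linarith
  have d2 : 0 < 1 + δ := by linarith
  calc ρ₁ / ρ₂ ≤ (1 / (1 - δ)) / (1 / (1 + δ)) := by
        apply div_le_div₀ _ e1 _ e2 <;> positivity
    _ = _ := by field_simp
end

section
/- Let B be a real matrix and let U₁ˢ, U₁ʷ be real matrices with orthonormal columns (of conformal sizes); set P_s := U₁ˢ(U₁ˢ)ᵀ and P_w := U₁ʷ(U₁ʷ)ᵀ, and define the intermediate approximation B̂ᵀ := P_s Bᵀ P_w. Let X_s and X_w be real matrices, and assume ‖(I − P_s)[X_s, BᵀX_w]‖ ≤ ε₁‖[X_s, BᵀX_w]‖ and ‖(I − P_w)[X_w, BX_s]‖ ≤ ε₁‖[X_w, BX_s]‖, where ε₁ ≥ 0. Then ‖(Bᵀ − B̂ᵀ)X_w‖ ≤ ε₁·(‖[X_s, BᵀX_w]‖ + ‖Bᵀ‖·‖[X_w,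 BX_s]‖) and ‖(B − B̂)X_s‖ ≤ ε₁·(‖Bᵀ‖·‖[X_s, BᵀX_w]‖ + ‖[X_w, BX_s]‖). -/
open Matrix

/-- Spectral (ℓ²-operator) norm of a real matrix. -/
noncomputable def specNorm {m n : Type*} [Fintype m] [Fintype n] [DecidableEq n]
    (M : Matrix m n ℝ) : ℝ :=
  ‖LinearMap.toContinuousLinearMap (Matrix.toEuclideanLin M)‖

section Aux
open scoped Matrix.Norms.L2Operator

theorem specNorm_eq_aux {m n : Type*} [Fintype m] [Fintype n] [DecidableEq n]
    (M : Matrix m n ℝ) : specNorm M = ‖M‖ := by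
  rw [Matrix.l2_opNorm_def]; rfl

theorem iso_norm_aux {m n : Type*} [Fintype m] [Fintype n] [DecidableEq n]
    (V : Matrix m n ℝ) (h : Vᵀ * V = 1) : ‖V‖ ≤ 1 := by
  have h1 := Matrix.l2_opNorm_conjTranspose_mul_self V
  have h2 := Matrix.l2_opNorm_conjTranspose_mul_self (1 : Matrix n n ℝ)
  rw [Matrix.conjTranspose_eq_transpose_of_trivial] at h1 h2
  rw [h] at h1
  rw [Matrix.transpose_one, one_mul] at h2
  have h3 := norm_nonneg V
  have h4 := norm_nonneg (1 : Matrix n n ℝ)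
  have h5 : ‖(1 : Matrix n n ℝ)‖ ≤ 1 := by
    by_contra hc
    push Not at hc
    nlinarith
  nlinarith

theorem proj_norm_aux {m n : Type*} [Fintype m] [Fintype n] [DecidableEq m] [DecidableEq n]
    (V : Matrix m n ℝ) (h : Vᵀ * V = 1) : ‖V * Vᵀ‖ ≤ 1 := by
  have h1 := iso_norm_aux V h
  have h2 := Matrix.l2_opNorm_conjTranspose V
  rw [Matrix.conjTranspose_eq_transpose_of_trivial] at h2
  have h3 := Matrix.l2_opNorm_mul V Vᵀ
  rw [h2] at h3
  nlinarith [norm_nonneg V]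

theorem block_left_aux {k m n l : Type*} [Fintype k] [Fintype m] [Fintype n] [Fintype l]
    [DecidableEq m] [DecidableEq n] [DecidableEq l]
    (M : Matrix k m ℝ) (X : Matrix m n ℝ) (Y : Matrix m l ℝ) :
    ‖M * X‖ ≤ ‖M * Matrix.fromCols X Y‖ := by
  have e : M * X = (M * Matrix.fromCols X Y) *
      Matrix.fromRows (1 : Matrix n n ℝ) (0 : Matrix l n ℝ) := by
    rw [Matrix.mul_assoc, Matrix.fromCols_mul_fromRows]; simp
  have hi := iso_norm_aux (Matrix.fromRows (1 : Matrix n n ℝ) (0 : Matrix l n ℝ)) (by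
    rw [Matrix.transpose_fromRows, Matrix.fromCols_mul_fromRows]; simp)
  rw [e]
  exact (Matrix.l2_opNorm_mul _ _).trans (mul_le_of_le_one_right (norm_nonneg _) hi)

theorem block_right_aux {k m n l : Type*} [Fintype k] [Fintype m] [Fintype n] [Fintype l]
    [DecidableEq m] [DecidableEq n] [DecidableEq l]
    (M : Matrix k m ℝ) (X : Matrix m n ℝ) (Y : Matrix m l ℝ) :
    ‖M * Y‖ ≤ ‖M * Matrix.fromCols X Y‖ := by
  have e : M * Y = (M * Matrix.fromCols X Y) *
      Matrix.fromRows (0 : Matrix n l ℝ) (1 : Matrix l l ℝ) := by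
    rw [Matrix.mul_assoc, Matrix.fromCols_mul_fromRows]; simp
  have hi := iso_norm_aux (Matrix.fromRows (0 : Matrix n l ℝ) (1 : Matrix l l ℝ)) (by
    rw [Matrix.transpose_fromRows, Matrix.fromCols_mul_fromRows]; simp)
  rw [e]
  exact (Matrix.l2_opNorm_mul _ _).trans (mul_le_of_le_one_right (norm_nonneg _) hi)

theorem half_aux {m n l : Type*} [Fintype m] [Fintype n] [Fintype l]
    [DecidableEq m] [DecidableEq n] [DecidableEq l]
    (C : Matrix m n ℝ) (P : Matrix m m ℝ) (Q : Matrix n n ℝ) (X : Matrix n l ℝ)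
    (hP : ‖P‖ ≤ 1) (α β : ℝ) (h1 : ‖(1 - P) * (C * X)‖ ≤ α) (h2 : ‖(1 - Q) * X‖ ≤ β) :
    ‖(C - P * C * Q) * X‖ ≤ α + ‖C‖ * β := by
  have e : (C - P * C * Q) * X = (1 - P) * (C * X) + P * (C * ((1 - Q) * X)) := by
    simp only [Matrix.sub_mul, Matrix.mul_sub, Matrix.one_mul, Matrix.mul_assoc]
    abel
  rw [e]
  refine (norm_add_le _ _).trans (add_le_add h1 ?_)
  calc ‖P * (C * ((1 - Q) * X))‖ ≤ ‖P‖ * ‖C * ((1 - Q) * X)‖ := Matrix.l2_opNorm_mul _ _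
    _ ≤ ‖C * ((1 - Q) * X)‖ := mul_le_of_le_one_left (norm_nonneg _) hP
    _ ≤ ‖C‖ * ‖(1 - Q) * X‖ := Matrix.l2_opNorm_mul _ _
    _ ≤ ‖C‖ * β := mul_le_mul_of_nonneg_left h2 (norm_nonneg _)

end Aux

/-- First-order symmetric projection.  With orthonormal-column
matrices `U₁ˢ, U₁ʷ`, projections `P_s := U₁ˢ(U₁ˢ)ᵀ`, `P_w := U₁ʷ(U₁ʷ)ᵀ`,
intermediate approximation `B̂ᵀ := P_s Bᵀ P_w`, and hypotheses
`‖(I − P_s)[X_s, BᵀX_w]‖ ≤ ε₁‖[X_s, BᵀX_w]‖` and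
`‖(I − P_w)[X_w, BX_s]‖ ≤ ε₁‖[X_w, BX_s]‖`, one has
`‖(Bᵀ − B̂ᵀ)X_w‖ ≤ ε₁(‖[X_s, BᵀX_w]‖ + ‖Bᵀ‖‖[X_w, BX_s]‖)` and
`‖(B − B̂)X_s‖ ≤ ε₁(‖Bᵀ‖‖[X_s, BᵀX_w]‖ + ‖[X_w, BX_s]‖)`. -/
theorem first_order_symmetric_projection {w s p₁ p₂ a b : ℕ}
    (B : Matrix (Fin w) (Fin s) ℝ)
    (U₁s : Matrix (Fin s) (Fin p₁) ℝ) (U₁w : Matrix (Fin w) (Fin p₂) ℝ)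
    (hU₁s : U₁sᵀ * U₁s = 1) (hU₁w : U₁wᵀ * U₁w = 1)
    (Xs : Matrix (Fin s) (Fin a) ℝ) (Xw : Matrix (Fin w) (Fin b) ℝ)
    (ε₁ : ℝ) (hε₁ : 0 ≤ ε₁)
    (Bhat : Matrix (Fin s) (Fin w) ℝ)
    (hBhat : Bhat = U₁s * U₁sᵀ * Bᵀ * (U₁w * U₁wᵀ))
    (Ys : Matrix (Fin s) (Fin a ⊕ Fin b) ℝ)
    (hYs : Ys = Matrix.fromCols Xs (Bᵀ * Xw))
    (Yw : Matrix (Fin w) (Fin b ⊕ Fin a) ℝ)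
    (hYw : Yw = Matrix.fromCols Xw (B * Xs))
    (hs : specNorm ((1 - U₁s * U₁sᵀ) * Ys) ≤ ε₁ * specNorm Ys)
    (hw : specNorm ((1 - U₁w * U₁wᵀ) * Yw) ≤ ε₁ * specNorm Yw) :
    specNorm ((Bᵀ - Bhat) * Xw)
      ≤ ε₁ * (specNorm Ys + specNorm Bᵀ * specNorm Yw) ∧
    specNorm ((B - Bhatᵀ) * Xs)
      ≤ ε₁ * (specNorm Bᵀ * specNorm Ys + specNorm Yw) := by
  simp only [specNorm_eq_aux] at hs hw ⊢
  have hBt := Matrix.l2_opNorm_conjTranspose B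
  rw [Matrix.conjTranspose_eq_transpose_of_trivial] at hBt
  have hPs := proj_norm_aux U₁s hU₁s
  have hPw := proj_norm_aux U₁w hU₁w
  have hT : Bhatᵀ = U₁w * U₁wᵀ * B * (U₁s * U₁sᵀ) := by
    rw [hBhat]; simp [Matrix.transpose_mul, Matrix.mul_assoc]
  have s1 := (block_left_aux (1 - U₁s * U₁sᵀ) Xs (Bᵀ * Xw)).trans (hYs ▸ hs)
  have s2 := (block_right_aux (1 - U₁s * U₁sᵀ) Xs (Bᵀ * Xw)).trans (hYs ▸ hs)
  have w1 := (block_left_aux (1 - U₁w * U₁wᵀ) Xw (B * Xs)).trans (hYw ▸ hw)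
  have w2 := (block_right_aux (1 - U₁w * U₁wᵀ) Xw (B * Xs)).trans (hYw ▸ hw)
  rw [hT, hBhat, hYs, hYw]
  constructor
  · refine (half_aux Bᵀ _ _ Xw hPs _ _ s2 w1).trans (le_of_eq ?_)
    ring
  · refine (half_aux B _ _ Xs hPw _ _ w2 s1).trans (le_of_eq ?_)
    rw [hBt]
    ring
end
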